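/- arXiv:2507.19139 — 3 statements merged into one kernel-verified Lean document; each statement's English description precedes it below -/
import Mathlib

section
/- Let S = {s1, …, sk} be a set of pairwise matching strings of length n over Σ, and let s* be a string of length n that is matching with every string of S. Then for every i ∈ {1, …, k}, ∂S(s*, s_i) = ∂Ham(h_{s1,s*}, h_{s1,s_i}). -/
/-!
Strings of length `n` over an alphabet `α` are modelled as functions `ℕ → α`,
where only the values at positions `0, …, n-1` (0-indexed) are relevant.
A swap at (0-indexed) position `p` exchanges the letters at positions `p` and `p+1`.
A swap permutation is modelled as a `Finset ℕ` of swap positions, pairwise at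
distance ≥ 2 (equivalently: containing no two consecutive positions).
-/

universe u

variable {α : Type u}

/-- `P` is a swap permutation for strings of length `n`: every swap position is in range
and no two swaps overlap (positions are pairwise at distance ≥ 2). -/
def IsSwapSet (n : ℕ) (P : Finset ℕ) : Prop :=
  (∀ p ∈ P, p + 1 < n) ∧ (∀ p ∈ P, p + 1 ∉ P)

/-- Apply a set of pairwise disjoint swaps to a string. -/
def applySwaps (P : Finset ℕ) (s : ℕ → α) : ℕ → α := fun i =>
  if i ∈ P then s (i + 1)
  else if 0 < i ∧ i - 1 ∈ P then s (i - 1)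
  else s i

/-- The swap permutation `P` transforms `s1` into `s2` (as length-`n` strings). -/
def Transforms (n : ℕ) (P : Finset ℕ) (s1 s2 : ℕ → α) : Prop :=
  IsSwapSet n P ∧ ∀ i < n, applySwaps P s1 i = s2 i

/-- Two length-`n` strings are matching if some swap permutation transforms one
into the other. -/
def SwMatching (n : ℕ) (s1 s2 : ℕ → α) : Prop :=
  ∃ P : Finset ℕ, Transforms n P s1 s2

/-- `P` is a *valid* swap permutation transforming `s1` into `s2`:
it transforms `s1` into `s2` and never swaps two identical letters. -/
def ValidTransform (n : ℕ) (P : Finset ℕ) (s1 s2 : ℕ → α) : Prop :=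
  Transforms n P s1 s2 ∧ ∀ p ∈ P, s1 p ≠ s1 (p + 1)

/-- Hamming distance of two length-`n` strings. -/
noncomputable def hamDist {β : Type*} (n : ℕ) (s t : ℕ → β) : ℕ :=
  letI : DecidablePred (fun i => s i ≠ t i) := fun _ => Classical.propDecidable _
  ((Finset.range n).filter (fun i => s i ≠ t i)).card

/-- Swap distance: the number of swaps of the valid swap permutation transforming
`s1` into `s2` (unique when it exists), and `⊤` if the strings are not matching. -/
noncomputable def swapDist (n : ℕ) (s1 s2 : ℕ → α) : ℕ∞ :=
  sInf {m : ℕ∞ | ∃ P : Finset ℕ, ValidTransform n P s1 s2 ∧ m = (P.card : ℕ∞)}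

/-- Swap+Hamming distance: minimum over all length-`n` strings `t` of
`∂S(s1,t) + ∂Ham(t,s2)`. -/
noncomputable def shDist (n : ℕ) (s1 s2 : ℕ → α) : ℕ∞ :=
  ⨅ t : ℕ → α, swapDist n s1 t + (hamDist n t s2 : ℕ∞)

/-- Number of occurrences of the letter `x` at positions `a ≤ i < b` of the string `s`. -/
noncomputable def countIn {β : Type*} (s : ℕ → β) (a b : ℕ) (x : β) : ℕ :=
  letI : DecidablePred (fun i => s i = x) := fun _ => Classical.propDecidable _
  ((Finset.Ico a b).filter (fun i => s i = x)).card

/-- Greedy (left-to-right) swap set between two strings: position `p` is greedily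
swapped iff `s1[p] = s2[p+1]`, `s1[p+1] = s2[p]`, `s1[p] ≠ s1[p+1]`, and position
`p-1` was not swapped. -/
def greedyMem (s1 s2 : ℕ → α) : ℕ → Prop
  | 0 => s1 0 = s2 1 ∧ s1 1 = s2 0 ∧ s1 0 ≠ s1 1
  | p + 1 => (s1 (p + 1) = s2 (p + 2) ∧ s1 (p + 2) = s2 (p + 1) ∧ s1 (p + 1) ≠ s1 (p + 2))
      ∧ ¬ greedyMem s1 s2 p

/-- The greedy swap set `G(s1,s2)` restricted to the valid positions `0, …, n-2`. -/
noncomputable def greedySet (n : ℕ) (s1 s2 : ℕ → α) : Finset ℕ :=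
  letI : DecidablePred (greedyMem s1 s2) := fun _ => Classical.propDecidable _
  (Finset.range (n - 1)).filter (greedyMem s1 s2)

/-- `SW(S, t, i)`: the set of indices `j` such that `t` and `s j` have a greedy swap
at position `i`. -/
noncomputable def SW (n : ℕ) {k : ℕ} (s : Fin k → ℕ → α) (t : ℕ → α) (i : ℕ) :
    Finset (Fin k) :=
  letI : DecidablePred (fun j : Fin k => i ∈ greedySet n t (s j)) :=
    fun _ => Classical.propDecidable _
  Finset.univ.filter (fun j => i ∈ greedySet n t (s j))

/-- The swap `(p, p+1)` is necessary for the input string `s i` if every string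
matching all strings of `S` has a swap at position `p` in its valid swap
permutation towards `s i`. -/
def NecessarySwap (n : ℕ) {k : ℕ} (s : Fin k → ℕ → α) (i : Fin k) (p : ℕ) : Prop :=
  ∀ t : ℕ → α, (∀ j, SwMatching n t (s j)) →
    ∀ P : Finset ℕ, ValidTransform n P t (s i) → p ∈ P

/-- Lexicographic strict order on length-`n` strings. -/
def LexLt {β : Type*} [LinearOrder β] (n : ℕ) (s t : ℕ → β) : Prop :=
  ∃ i < n, s i < t i ∧ ∀ j < i, s j = t j

theorem SwMatching.exists_validTransform {n : ℕ} {s t : ℕ → α} (h : SwMatching n s t) :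
    ∃ R : Finset ℕ, ValidTransform n R s t := by
  classical
  obtain ⟨P, ⟨hlt, hdisj⟩, happ⟩ := h
  refine ⟨P.filter fun p => s p ≠ s (p + 1), ⟨⟨?_, ?_⟩, ?_⟩, ?_⟩
  · intro p hp
    exact hlt p (Finset.mem_filter.1 hp).1
  · intro p hp hp'
    exact hdisj p (Finset.mem_filter.1 hp).1 (Finset.mem_filter.1 hp').1
  · intro i hi
    rw [← happ i hi]
    rcases i with _ | i
    · simp only [applySwaps, Finset.mem_filter]
      grind
    · have := hdisj i
      simp only [applySwaps, Finset.mem_filter, Nat.add_sub_cancel]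
      grind
  · intro p hp
    exact (Finset.mem_filter.1 hp).2

theorem Transforms.apply_zero {n : ℕ} {P : Finset ℕ} {s t : ℕ → α}
    (h : Transforms n P s t) (hn : 0 < n) : t 0 = if 0 ∈ P then s 1 else s 0 := by
  simpa [applySwaps] using (h.2 0 hn).symm

theorem Transforms.apply_succ {n : ℕ} {P : Finset ℕ} {s t : ℕ → α}
    (h : Transforms n P s t) {i : ℕ} (hi : i + 1 < n) :
    t (i + 1) = if i + 1 ∈ P then s (i + 2) else if i ∈ P then s i else s (i + 1) := by
  simpa [applySwaps] using (h.2 (i + 1) hi).symm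

theorem Transforms.apply_of_mem {n : ℕ} {P : Finset ℕ} {s t : ℕ → α}
    (h : Transforms n P s t) {i : ℕ} (hi : i ∈ P) : t i = s (i + 1) := by
  have := h.1.1 i hi
  simpa [applySwaps, hi] using (h.2 i (by omega)).symm

/-- Valid swap permutations between pairwise matching strings compose as symmetric differences. -/
theorem ValidTransform.mem_iff {n : ℕ} {P Q R : Finset ℕ} {s t u : ℕ → α}
    (hP : ValidTransform n P s t) (hQ : ValidTransform n Q s u) (hR : ValidTransform n R t u)
    (p : ℕ) : p ∈ R ↔ ¬(p ∈ P ↔ p ∈ Q) := by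
  by_cases hp : p + 1 < n
  swap
  · have h₁ := hP.1.1.1 p
    have h₂ := hQ.1.1.1 p
    have h₃ := hR.1.1.1 p
    tauto
  have vP := hP.2 p
  have vQ := hQ.2 p
  have vR := hR.2 p
  induction p with
  | zero =>
    have a := hP.1.apply_zero (by omega)
    have b := hQ.1.apply_zero (by omega)
    have c := hR.1.apply_zero (by omega)
    grind
  | succ p ih =>
    have ih := ih (by omega) (hP.2 p) (hQ.2 p) (hR.2 p)
    have a := hP.1.apply_succ (i := p) (by omega)
    have b := hQ.1.apply_succ (i := p) (by omega)
    have c := hR.1.apply_succ (i := p) (by omega)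
    have a' := hP.1.apply_of_mem (i := p)
    have b' := hQ.1.apply_of_mem (i := p)
    have c' := hR.1.apply_of_mem (i := p)
    have dP := hP.1.1.2 p
    have dQ := hQ.1.1.2 p
    have dR := hR.1.1.2 p
    grind

theorem ValidTransform.hamDist_eq_card {n : ℕ} {P Q R : Finset ℕ} {s t u : ℕ → α}
    (hP : ValidTransform n P s t) (hQ : ValidTransform n Q s u) (hR : ValidTransform n R t u) :
    hamDist (n - 1) (fun p => decide (p ∈ P)) (fun p => decide (p ∈ Q)) = R.card := by
  unfold hamDist
  congr 1
  ext p
  have := hR.1.1.1 p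
  have := hP.mem_iff hQ hR p
  simp only [Finset.mem_filter, Finset.mem_range, ne_eq, decide_eq_decide]
  grind

/-- Let `S = {s 0, …, s (k-1)}` be pairwise matching strings of length
`n` and let `s*` be matching with every string of `S`. Then for every `i`,
`∂S(s*, s i) = ∂Ham(h_{s1,s*}, h_{s1,s i})`, where the swap strings (of length `n-1`)
are the indicator strings of the valid swap permutations `P = π(s1, s*)` and
`Q = π(s1, s i)` (with `s1 = s 0`). -/
theorem swapDist_eq_hamDist_of_swapStrings {α : Type u} (n k : ℕ) (hk : 0 < k)
    (s : Fin k → ℕ → α)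
    (hpair : ∀ i j, SwMatching n (s i) (s j))
    (sstar : ℕ → α) (hstar : ∀ i, SwMatching n sstar (s i))
    (i : Fin k) (P Q : Finset ℕ)
    (hP : ValidTransform n P (s ⟨0, hk⟩) sstar)
    (hQ : ValidTransform n Q (s ⟨0, hk⟩) (s i)) :
    swapDist n sstar (s i)
      = (hamDist (n - 1) (fun p => decide (p ∈ P)) (fun p => decide (p ∈ Q)) : ℕ∞) := by
  obtain ⟨R, hR⟩ := (hstar i).exists_validTransform
  rw [hP.hamDist_eq_card hQ hR, swapDist]
  refine le_antisymm (sInf_le ⟨R, hR, rfl⟩) (le_sInf ?_)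
  rintro _ ⟨R', hR', rfl⟩
  rw [← hP.hamDist_eq_card hQ hR, hP.hamDist_eq_card hQ hR']
end

section
/- Let S = {s1, …, sk} be a set of pairwise matching strings of length n over Σ and D a nonnegative integer. There exists a string s* of length n over Σ with Σ_{i=1}^{k} ∂S(s_i, s*) ≤ D if and only if there exists a binary string h* of length n−1 with Σ_{i=1}^{k} ∂Ham(h_{s1,s_i}, h*) ≤ D. -/
/-!
Strings of length `n` over an alphabet `α` are modelled as functions `ℕ → α`,
where only the values at positions `0, …, n-1` (0-indexed) are relevant.
A swap at (0-indexed) position `p` exchanges the letters at positions `p` and `p+1`.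
A swap permutation is modelled as a `Finset ℕ` of swap positions, pairwise at
distance ≥ 2 (equivalently: containing no two consecutive positions).
-/

universe u

variable {α : Type u}

/-- The multiset of the letters at the first `m` positions of `s`. -/
def initialLetters (s : ℕ → α) (m : ℕ) : Multiset α := (Multiset.range m).map s

theorem initialLetters_succ (s : ℕ → α) (m : ℕ) :
    initialLetters s (m + 1) = s m ::ₘ initialLetters s m := by
  simp [initialLetters, Multiset.range_succ]

theorem applySwaps_of_mem {P : Finset ℕ} (s : ℕ → α) {i : ℕ} (h : i ∈ P) :
    applySwaps P s i = s (i + 1) := by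
  simp [applySwaps, h]

theorem applySwaps_succ_of_mem {P : Finset ℕ} (s : ℕ → α) {i : ℕ} (h : i ∈ P)
    (hi : i + 1 ∉ P) : applySwaps P s (i + 1) = s i := by
  simp [applySwaps, h, hi]

theorem applySwaps_zero_of_notMem {P : Finset ℕ} (s : ℕ → α) (h : 0 ∉ P) :
    applySwaps P s 0 = s 0 := by
  simp [applySwaps, h]

theorem applySwaps_succ_of_notMem {P : Finset ℕ} (s : ℕ → α) {i : ℕ} (h : i ∉ P)
    (hi : i + 1 ∉ P) : applySwaps P s (i + 1) = s (i + 1) := by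
  simp [applySwaps, h, hi]

/-- Swaps change the letters of an initial segment only when crossing its right end. -/
theorem Transforms.initialLetters_eq {n : ℕ} {P : Finset ℕ} {s t : ℕ → α}
    (h : Transforms n P s t) {m : ℕ} (hm : m < n) :
    (m ∈ P → s m ::ₘ initialLetters t (m + 1) = s (m + 1) ::ₘ initialLetters s (m + 1)) ∧
      (m ∉ P → initialLetters t (m + 1) = initialLetters s (m + 1)) := by
  obtain ⟨⟨-, hdisj⟩, happ⟩ := h
  induction m with
  | zero =>
    rw [initialLetters_succ, initialLetters_succ, ← happ 0 hm]
    constructor <;> intro h0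
    · rw [applySwaps_of_mem s h0, Multiset.cons_swap]
      rfl
    · rw [applySwaps_zero_of_notMem s h0]
      rfl
  | succ m ih =>
    have ih := ih (by omega)
    rw [initialLetters_succ t, initialLetters_succ s, ← happ _ hm]
    by_cases hp : m ∈ P
    · have hp' := hdisj m hp
      refine ⟨fun h1 => absurd h1 hp', fun _ => ?_⟩
      rw [applySwaps_succ_of_mem s hp hp', ih.1 hp]
    · rw [ih.2 hp]
      constructor <;> intro h1
      · rw [applySwaps_of_mem s h1, Multiset.cons_swap]
      · rw [applySwaps_succ_of_notMem s hp h1]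

theorem Transforms.mem_of_initialLetters_ne {n : ℕ} {P : Finset ℕ} {s t : ℕ → α}
    (h : Transforms n P s t) {m : ℕ} (hm : m < n)
    (hne : initialLetters t (m + 1) ≠ initialLetters s (m + 1)) : m ∈ P := by
  by_contra hp
  exact hne ((h.initialLetters_eq hm).2 hp)

theorem ValidTransform.mem_iff_s6 {n : ℕ} {P : Finset ℕ} {s t : ℕ → α}
    (h : ValidTransform n P s t) {m : ℕ} (hm : m < n) :
    m ∈ P ↔ initialLetters t (m + 1) ≠ initialLetters s (m + 1) := by
  refine ⟨fun hp heq => h.2 m hp ?_, h.1.mem_of_initialLetters_ne hm⟩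
  have := (h.1.initialLetters_eq hm).1 hp
  rwa [heq, Multiset.cons_inj_left] at this

/-- The valid swap permutation between two strings reached from a common string is the
symmetric difference of the two swap permutations. -/
theorem ValidTransform.eq_symmDiff {n : ℕ} {P Q R : Finset ℕ} {s t u : ℕ → α}
    (hP : ValidTransform n P s t) (hQ : ValidTransform n Q s u)
    (hR : ValidTransform n R t u) : R = symmDiff P Q := by
  ext p
  by_cases hp : p < n
  · rw [Finset.mem_symmDiff, hR.mem_iff_s6 hp]
    by_cases h1 : p ∈ P <;> by_cases h2 : p ∈ Q
    · have e1 := (hP.1.initialLetters_eq hp).1 h1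
      have e2 := (hQ.1.initialLetters_eq hp).1 h2
      rw [← e1, Multiset.cons_inj_right] at e2
      simp [h1, h2, e2]
    · have e1 := (hP.mem_iff_s6 hp).1 h1
      rw [(hQ.1.initialLetters_eq hp).2 h2]
      simp [h1, h2, e1.symm]
    · have e2 := (hQ.mem_iff_s6 hp).1 h2
      rw [(hP.1.initialLetters_eq hp).2 h1]
      simp [h1, h2, e2]
    · rw [(hP.1.initialLetters_eq hp).2 h1, (hQ.1.initialLetters_eq hp).2 h2]
      simp [h1, h2]
  · have key {S : Finset ℕ} (hS : IsSwapSet n S) : p ∉ S := fun h => hp (by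
      have := hS.1 p h
      omega)
    simp [Finset.mem_symmDiff, key hP.1.1, key hQ.1.1, key hR.1.1]

/-- Valid swap permutations towards two matching strings do not overlap. -/
theorem ValidTransform.succ_notMem_of_matching {n : ℕ} {P Q : Finset ℕ} {s t u : ℕ → α}
    (hP : ValidTransform n P s t) (hQ : ValidTransform n Q s u)
    (htu : SwMatching n t u) {p : ℕ} (hp : p ∈ P) : p + 1 ∉ Q := by
  intro hq
  obtain ⟨R, hR⟩ := htu
  have hn : p + 1 < n := hP.1.1.1 p hp
  have hpQ : p ∉ Q := fun h => hQ.1.1.2 p h hq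
  have hqP : p + 1 ∉ P := hP.1.1.2 p hp
  have h1 : p ∈ R := by
    refine hR.mem_of_initialLetters_ne (by omega) ?_
    rw [(hQ.1.initialLetters_eq (by omega)).2 hpQ]
    exact ((hP.mem_iff_s6 (by omega)).1 hp).symm
  have h2 : p + 1 ∈ R := by
    refine hR.mem_of_initialLetters_ne hn ?_
    rw [(hP.1.initialLetters_eq hn).2 hqP]
    exact (hQ.mem_iff_s6 hn).1 hq
  exact hR.1.2 p h1 h2

/-- Inside a family of pairwise disjoint swaps of distinct letters, the symmetric difference
of two swap permutations leads from the result of the first to that of the second. -/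
theorem ValidTransform.symmDiff_of_subset {n : ℕ} {U P H : Finset ℕ} {s t : ℕ → α}
    (hU : IsSwapSet n U) (hUs : ∀ p ∈ U, s p ≠ s (p + 1)) (hPU : P ⊆ U) (hHU : H ⊆ U)
    (hP : ValidTransform n P s t) :
    ValidTransform n (symmDiff P H) t (applySwaps H s) := by
  have hsub : symmDiff P H ⊆ U := by
    intro p hp
    rcases Finset.mem_symmDiff.1 hp with h | h
    exacts [hPU h.1, hHU h.1]
  have hval : ∀ p ∈ U, (p ∈ P → t p = s (p + 1) ∧ t (p + 1) = s p) ∧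
      (p ∉ P → t p = s p ∧ t (p + 1) = s (p + 1)) := by
    intro p hp
    have hn := hU.1 p hp
    have hp' : p + 1 ∉ P := fun h => hU.2 p hp (hPU h)
    rw [← hP.1.2 p (by omega), ← hP.1.2 (p + 1) hn]
    refine ⟨fun h => ⟨applySwaps_of_mem s h, applySwaps_succ_of_mem s h hp'⟩,
      fun h => ⟨?_, applySwaps_succ_of_notMem s h hp'⟩⟩
    cases p with
    | zero => exact applySwaps_zero_of_notMem s h
    | succ q => exact applySwaps_succ_of_notMem s (fun hq => hU.2 q (hPU hq) hp) h
  refine ⟨⟨⟨fun p hp => hU.1 p (hsub hp), fun p hp hp' => hU.2 p (hsub hp) (hsub hp')⟩, ?_⟩, ?_⟩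
  · intro i hi
    by_cases hiU : i ∈ U
    · have hprev : ∀ S ⊆ U, ¬ (0 < i ∧ i - 1 ∈ S) := by
        rintro S hS ⟨h0, h1⟩
        apply hU.2 _ (hS h1)
        rwa [Nat.sub_add_cancel h0]
      have hv := hval i hiU
      simp only [applySwaps, if_neg (hprev _ hsub), if_neg (hprev _ hHU)]
      simp only [Finset.mem_symmDiff]
      by_cases h1 : i ∈ P <;> by_cases h2 : i ∈ H <;> simp [h1, h2, hv]
    · have hiS : ∀ S ⊆ U, i ∉ S := fun S hS h => hiU (hS h)
      have ht := hP.1.2 i hi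
      cases i with
      | zero =>
        rw [applySwaps_zero_of_notMem s (hiS _ hPU)] at ht
        rw [applySwaps_zero_of_notMem _ (hiS _ hsub), applySwaps_zero_of_notMem _ (hiS _ hHU), ht]
      | succ q =>
        by_cases hq : q ∈ U
        · have hv := hval q hq
          simp only [applySwaps, if_neg (hiS _ hsub), if_neg (hiS _ hHU)]
          simp only [Finset.mem_symmDiff, Nat.add_sub_cancel]
          by_cases h1 : q ∈ P <;> by_cases h2 : q ∈ H <;> simp [h1, h2, hv]
        · have hqS : ∀ S ⊆ U, q ∉ S := fun S hS h => hq (hS h)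
          rw [applySwaps_succ_of_notMem _ (hqS _ hPU) (hiS _ hPU)] at ht
          rw [applySwaps_succ_of_notMem _ (hqS _ hsub) (hiS _ hsub),
            applySwaps_succ_of_notMem _ (hqS _ hHU) (hiS _ hHU), ht]
  · intro p hp
    have hpU := hsub hp
    by_cases h1 : p ∈ P
    · rw [((hval p hpU).1 h1).1, ((hval p hpU).1 h1).2]
      exact (hUs p hpU).symm
    · rw [((hval p hpU).2 h1).1, ((hval p hpU).2 h1).2]
      exact hUs p hpU

/-- Hamming distance of indicator strings, as the size of a symmetric difference. -/
theorem hamDist_indicator {m : ℕ} {P Q : Finset ℕ} (hP : ∀ p ∈ P, p < m)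
    (hQ : ∀ p ∈ Q, p < m) :
    hamDist m (fun p => decide (p ∈ P)) (fun p => decide (p ∈ Q)) = (symmDiff P Q).card := by
  unfold hamDist
  congr 1
  ext p
  have h1 := hP p
  have h2 := hQ p
  simp only [Finset.mem_filter, Finset.mem_range, Finset.mem_symmDiff, ne_eq, decide_eq_decide]
  tauto

theorem swapDist_le_card {n : ℕ} {P : Finset ℕ} {s t : ℕ → α} (h : ValidTransform n P s t) :
    swapDist n s t ≤ (P.card : ℕ∞) :=
  sInf_le ⟨P, h, rfl⟩

theorem exists_validTransform_of_swapDist_ne_top {n : ℕ} {s t : ℕ → α}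
    (h : swapDist n s t ≠ ⊤) :
    ∃ P : Finset ℕ, ValidTransform n P s t ∧ swapDist n s t = (P.card : ℕ∞) := by
  apply csInf_mem (s := {m : ℕ∞ | ∃ P : Finset ℕ, ValidTransform n P s t ∧ m = (P.card : ℕ∞)})
  by_contra hne
  rw [Set.not_nonempty_iff_eq_empty] at hne
  exact h (by rw [swapDist, hne, sInf_empty])

/-- Let `S = {s 0, …, s (k-1)}` be pairwise matching strings of length
`n`, with `P i = π(s1, s i)` the valid swap permutation from `s1 = s 0` to `s i` (so the
swap string `h_{s1, s i}` is the indicator string of `P i`; for `i = 0` it is all-zero).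
Then there is a length-`n` string `s*` with `∑ i, ∂S(s i, s*) ≤ D` iff there is a binary
string `h*` of length `n-1` with `∑ i, ∂Ham(h_{s1,s i}, h*) ≤ D`. -/
theorem sum_swap_iff_sum_hamming {α : Type u} (n k : ℕ) (hk : 0 < k)
    (s : Fin k → ℕ → α)
    (hpair : ∀ i j, SwMatching n (s i) (s j))
    (D : ℕ) (P : Fin k → Finset ℕ)
    (hP : ∀ i, ValidTransform n (P i) (s ⟨0, hk⟩) (s i)) :
    (∃ sstar : ℕ → α, ∑ i, swapDist n (s i) sstar ≤ (D : ℕ∞)) ↔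
    (∃ hstar : ℕ → Bool,
      ∑ i, hamDist (n - 1) (fun p => decide (p ∈ P i)) hstar ≤ D) := by
  constructor
  · rintro ⟨sstar, hs⟩
    have hfin : ∀ i, swapDist n (s i) sstar ≠ ⊤ := fun i => ne_top_of_le_ne_top
      (ENat.natCast_ne_top D) ((Finset.single_le_sum (f := fun i => swapDist n (s i) sstar)
        (fun _ _ => zero_le) (Finset.mem_univ i)).trans hs)
    choose Q hQ hcard using fun i => exists_validTransform_of_swapDist_ne_top (hfin i)
    refine ⟨fun p => decide (p ∈ Q ⟨0, hk⟩), ?_⟩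
    have hle : ∑ i, (Q i).card ≤ D := by
      simp only [hcard] at hs
      exact_mod_cast hs
    refine le_of_eq_of_le (Finset.sum_congr rfl fun i _ => ?_) hle
    rw [(hP i).eq_symmDiff (hQ ⟨0, hk⟩) (hQ i)]
    refine hamDist_indicator (fun p hp => ?_) (fun p hp => ?_)
    · have := (hP i).1.1.1 p hp
      omega
    · have := (hQ ⟨0, hk⟩).1.1.1 p hp
      omega
  · rintro ⟨hstar, hh⟩
    let U : Finset ℕ := Finset.univ.biUnion P
    have hPU : ∀ i, P i ⊆ U := fun i => Finset.subset_biUnion_of_mem P (Finset.mem_univ i)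
    have hmem : ∀ p ∈ U, ∃ i, p ∈ P i := fun p hp => by simpa [U] using hp
    have hU : IsSwapSet n U := by
      refine ⟨fun p hp => ?_, fun p hp hp' => ?_⟩
      · obtain ⟨i, hi⟩ := hmem p hp
        exact (hP i).1.1.1 p hi
      · obtain ⟨i, hi⟩ := hmem p hp
        obtain ⟨j, hj⟩ := hmem _ hp'
        exact (hP i).succ_notMem_of_matching (hP j) (hpair i j) hi hj
    have hUs : ∀ p ∈ U, s ⟨0, hk⟩ p ≠ s ⟨0, hk⟩ (p + 1) := fun p hp => by
      obtain ⟨i, hi⟩ := hmem p hp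
      exact (hP i).2 p hi
    let H : Finset ℕ := U.filter fun p => hstar p = true
    have hHU : H ⊆ U := Finset.filter_subset _ _
    refine ⟨applySwaps H (s ⟨0, hk⟩), le_trans ?_ (Nat.cast_le.2 hh)⟩
    rw [Nat.cast_sum]
    refine Finset.sum_le_sum fun i _ => ?_
    have hV := ValidTransform.symmDiff_of_subset hU hUs (hPU i) hHU (hP i)
    refine (swapDist_le_card hV).trans (Nat.cast_le.2 (Finset.card_le_card fun p hp => ?_))
    have hn := hV.1.1.1 p hp
    have hPp := @hPU i p
    simp only [H, Finset.mem_symmDiff, Finset.mem_filter] at hp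
    simp only [Finset.mem_filter, Finset.mem_range]
    refine ⟨by omega, ?_⟩
    rcases hp with ⟨h1, h2⟩ | ⟨⟨-, h2⟩, h3⟩
    · have : hstar p ≠ true := fun h => h2 ⟨hPp h1, h⟩
      simp [h1, this]
    · simp [h2, h3]
end

section
/- Let Σ be a finite linearly ordered alphabet and S = {s1, …, sk} a set of strings of length n over Σ. Let s*_H be the lexicographically smallest string of length n minimizing Σ_{j=1}^{k} ∂Ham(·, s_j), and let s*_SH be the lexicographically smallest string of length n minimizing Σ_{j=1}^{k} ∂SH(·, s_j). Then for each position i with 1 ≤ i ≤ n: if s*_SH[i] ≠ s*_H[i], then SW(S, s*_SH, i−1) ≠ ∅ or SW(S, s*_SH, i) ≠ ∅. -/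
/-!
Strings of length `n` over an alphabet `α` are modelled as functions `ℕ → α`,
where only the values at positions `0, …, n-1` (0-indexed) are relevant.
A swap at (0-indexed) position `p` exchanges the letters at positions `p` and `p+1`.
A swap permutation is modelled as a `Finset ℕ` of swap positions, pairwise at
distance ≥ 2 (equivalently: containing no two consecutive positions).
-/

universe u

variable {α : Type u}

open Classical in
/-- Total cost of performing the swaps `P` on `t` and then correcting the mismatches with `s`,
restricted to the first `m` positions. -/
noncomputable def prefixCost (P : Finset ℕ) (t s : ℕ → α) (m : ℕ) : ℕ :=
  ∑ i ∈ Finset.range m,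
    ((if i ∈ P then 1 else 0) + if applySwaps P t i ≠ s i then 1 else 0)

theorem hamDist_eq_sum [DecidableEq α] (n : ℕ) (s t : ℕ → α) :
    hamDist n s t = ∑ i ∈ Finset.range n, if s i ≠ t i then 1 else 0 := by
  rw [← Finset.card_filter]
  unfold hamDist
  congr

theorem prefixCost_eq {n : ℕ} {P : Finset ℕ} (hP : ∀ p ∈ P, p < n) (t s : ℕ → α) :
    prefixCost P t s n = P.card + hamDist n (applySwaps P t) s := by
  classical
  rw [prefixCost, Finset.sum_add_distrib, hamDist_eq_sum, ← Finset.card_filter]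
  have : (Finset.range n).filter (· ∈ P) = P := by
    ext p
    simpa using hP p
  rw [this]

theorem mem_greedySet_iff (n : ℕ) (t s : ℕ → α) (p : ℕ) :
    p ∈ greedySet n t s ↔ p + 1 < n ∧ (t p = s (p + 1) ∧ t (p + 1) = s p ∧ t p ≠ t (p + 1)) ∧
      ¬ (0 < p ∧ p - 1 ∈ greedySet n t s) := by
  have key : ∀ q, q ∈ greedySet n t s ↔ q + 1 < n ∧ greedyMem t s q := fun q => by
    simp only [greedySet, Finset.mem_filter, Finset.mem_range]
    exact and_congr_left fun _ => by omega
  rw [key, key]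
  cases p with
  | zero => simp [greedyMem]
  | succ p =>
    simp only [greedyMem, Nat.add_sub_cancel]
    constructor
    · rintro ⟨h, h1, h2⟩
      exact ⟨h, h1, fun h3 => h2 h3.2.2⟩
    · rintro ⟨h, h1, h2⟩
      exact ⟨h, h1, fun h3 => h2 ⟨by omega, by omega, h3⟩⟩

open Classical in
/-- Every prefix is processed by the greedy swaps at no larger cost than by any swap set `P`;
an ongoing swap of `P` that the greedy set does not share leaves `P` at a disadvantage. -/
theorem prefixCost_greedySet_invariant {n : ℕ} {P : Finset ℕ} (hP : IsSwapSet n P)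
    (t s : ℕ → α) (m : ℕ) :
    prefixCost (greedySet n t s) t s m ≤ prefixCost P t s m ∧
      (0 < m → m - 1 ∈ P → m - 1 ∉ greedySet n t s →
        prefixCost (greedySet n t s) t s m + 1 ≤
          prefixCost P t s m + if t (m - 1) ≠ s m then 1 else 0) := by
  obtain ⟨hPn, hPs⟩ := hP
  have hG := mem_greedySet_iff n t s
  generalize greedySet n t s = G at hG ⊢
  induction m with
  | zero => simp [prefixCost]
  | succ m ih =>
    simp only [prefixCost, Finset.sum_range_succ] at ih ⊢
    generalize (∑ i ∈ Finset.range m,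
      ((if i ∈ G then 1 else 0) + if applySwaps G t i ≠ s i then 1 else 0)) = a at ih ⊢
    generalize (∑ i ∈ Finset.range m,
      ((if i ∈ P then 1 else 0) + if applySwaps P t i ≠ s i then 1 else 0)) = b at ih ⊢
    have hGm := hG m
    have hPm := hPn m
    rcases m with _ | m
    · simp only [applySwaps]
      grind
    · have hGp := hG m
      have hPp := hPs m
      simp only [applySwaps, Nat.add_sub_cancel, Nat.zero_lt_succ, true_and, forall_const]
        at ih hGm ⊢
      clear hG hPs hPn
      grind

theorem greedySet_isSwapSet (n : ℕ) (t s : ℕ → α) : IsSwapSet n (greedySet n t s) := by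
  refine ⟨fun p hp => ((mem_greedySet_iff n t s p).1 hp).1, fun p hp hp' => ?_⟩
  exact ((mem_greedySet_iff n t s (p + 1)).1 hp').2.2 ⟨p.succ_pos, hp⟩

theorem hamDist_congr_left {n : ℕ} {t u : ℕ → α} (h : ∀ i < n, t i = u i) (s : ℕ → α) :
    hamDist n t s = hamDist n u s := by
  classical
  simp only [hamDist_eq_sum]
  exact Finset.sum_congr rfl fun i hi => by rw [h i (Finset.mem_range.1 hi)]

theorem shDist_le_of_isSwapSet {n : ℕ} {P : Finset ℕ} (hP : IsSwapSet n P) {t : ℕ → α}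
    (ht : ∀ p ∈ P, t p ≠ t (p + 1)) (s : ℕ → α) :
    shDist n t s ≤ ((P.card + hamDist n (applySwaps P t) s : ℕ) : ℕ∞) := by
  refine (iInf_le _ (applySwaps P t)).trans ?_
  push_cast
  gcongr
  exact sInf_le ⟨P, ⟨⟨hP, fun _ _ => rfl⟩, ht⟩, rfl⟩

/-- The greedy swap set realizes the Swap+Hamming distance. -/
theorem shDist_eq_greedySet (n : ℕ) (t s : ℕ → α) :
    shDist n t s = (((greedySet n t s).card +
      hamDist n (applySwaps (greedySet n t s) t) s : ℕ) : ℕ∞) := by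
  have hG := greedySet_isSwapSet n t s
  refine le_antisymm (shDist_le_of_isSwapSet hG
    (fun p hp => ((mem_greedySet_iff n t s p).1 hp).2.1.2.2) s) (le_iInf fun u => ?_)
  rw [swapDist, sInf_eq_iInf, ENat.iInf_add]
  refine le_iInf fun m => ?_
  rw [ENat.iInf_add]
  refine le_iInf ?_
  rintro ⟨P, ⟨⟨hP, hu⟩, -⟩, rfl⟩
  rw [← hamDist_congr_left hu s, ← Nat.cast_add, Nat.cast_le,
    ← prefixCost_eq (fun p hp => (Nat.lt_succ_self p).trans (hP.1 p hp)),
    ← prefixCost_eq (fun p hp => (Nat.lt_succ_self p).trans (hG.1 p hp))]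
  exact (prefixCost_greedySet_invariant hP t s n).1

theorem hamDist_update [DecidableEq α] {n i : ℕ} (hi : i < n) (t s : ℕ → α) (c : α) :
    hamDist n (Function.update t i c) s + (if t i ≠ s i then 1 else 0) =
      hamDist n t s + if c ≠ s i then 1 else 0 := by
  have hmem := Finset.mem_range.2 hi
  rw [hamDist_eq_sum, hamDist_eq_sum, ← Finset.add_sum_erase _ _ hmem,
    ← Finset.add_sum_erase (Finset.range n) (fun j => if t j ≠ s j then 1 else 0) hmem,
    Finset.sum_congr rfl (g := fun j => if t j ≠ s j then 1 else 0)
      fun j hj => by rw [Function.update_of_ne (Finset.ne_of_mem_erase hj)]]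
  simp only [Function.update_self]
  omega

theorem applySwaps_update {P : Finset ℕ} {i : ℕ} (hi : i ∉ P) (hi' : ¬ (0 < i ∧ i - 1 ∈ P))
    (t : ℕ → α) (c : α) :
    applySwaps P (Function.update t i c) = Function.update (applySwaps P t) i c := by
  funext j
  simp only [applySwaps, Function.update_apply]
  grind

/-- Changing a letter not touched by the greedy swaps changes the Swap+Hamming distance by at
most the change of the Hamming distance. -/
theorem shDist_update_le [DecidableEq α] {n i : ℕ} (hi : i < n) (t s : ℕ → α) (c : α)
    (hiG : i ∉ greedySet n t s) (hiG' : ¬ (0 < i ∧ i - 1 ∈ greedySet n t s)) :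
    shDist n (Function.update t i c) s + ((if t i ≠ s i then 1 else 0 : ℕ) : ℕ∞) ≤
      shDist n t s + ((if c ≠ s i then 1 else 0 : ℕ) : ℕ∞) := by
  have hval : ∀ p ∈ greedySet n t s,
      Function.update t i c p ≠ Function.update t i c (p + 1) := fun p hp => by
    rw [Function.update_of_ne (by rintro rfl; exact hiG hp),
      Function.update_of_ne (by rintro rfl; exact hiG' ⟨p.succ_pos, hp⟩)]
    exact ((mem_greedySet_iff n t s p).1 hp).2.1.2.2
  have hle := shDist_le_of_isSwapSet (greedySet_isSwapSet n t s) hval s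
  have hham := hamDist_update hi (applySwaps (greedySet n t s) t) s c
  have happ : applySwaps (greedySet n t s) t i = t i := by
    simp only [applySwaps, if_neg hiG, if_neg hiG']
  rw [applySwaps_update hiG hiG'] at hle
  rw [happ] at hham
  refine (add_le_add_left hle _).trans ?_
  rw [shDist_eq_greedySet n t s]
  rw [← Nat.cast_add, ← Nat.cast_add, Nat.cast_le]
  omega

theorem lexLt_update {β : Type*} [LinearOrder β] {n i : ℕ} (hi : i < n) {t : ℕ → β} {c : β}
    (hc : c < t i) : LexLt n (Function.update t i c) t :=
  ⟨i, hi, by simpa using hc, fun _ hj => Function.update_of_ne hj.ne _ _⟩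

/-- Let `sH` be the lexicographically smallest length-`n` string
minimizing `∑ j, ∂Ham(·, s j)` and `sSH` the lexicographically smallest length-`n`
string minimizing `∑ j, ∂SH(·, s j)`. Then for each position `i < n` (0-indexed), if
`sSH[i] ≠ sH[i]`, then `SW(S, sSH, i-1) ≠ ∅` or `SW(S, sSH, i) ≠ ∅`. -/
theorem swap_from_center {α : Type u} [LinearOrder α] (n k : ℕ) (s : Fin k → ℕ → α)
    (sH sSH : ℕ → α)
    (hHmin : ∀ t : ℕ → α, ∑ j, hamDist n sH (s j) ≤ ∑ j, hamDist n t (s j))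
    (hHlex : ∀ t : ℕ → α,
      ∑ j, hamDist n t (s j) ≤ ∑ j, hamDist n sH (s j) → ¬ LexLt n t sH)
    (hSHmin : ∀ t : ℕ → α, ∑ j, shDist n sSH (s j) ≤ ∑ j, shDist n t (s j))
    (hSHlex : ∀ t : ℕ → α,
      ∑ j, shDist n t (s j) ≤ ∑ j, shDist n sSH (s j) → ¬ LexLt n t sSH)
    (i : ℕ) (hi : i < n) (hne : sSH i ≠ sH i) :
    (0 < i ∧ SW n s sSH (i - 1) ≠ ∅) ∨ SW n s sSH i ≠ ∅ := by
  by_contra hcon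
  push Not at hcon
  obtain ⟨hcon', hcon⟩ := hcon
  have hnot : ∀ p, SW n s sSH p = ∅ → ∀ j, p ∉ greedySet n sSH (s j) := fun p hp j hj => by
    have : j ∈ SW n s sSH p := by simpa [SW] using hj
    simp [hp] at this
  have hSH : ∑ j, shDist n (Function.update sSH i (sH i)) (s j) +
      ((∑ j, if sSH i ≠ s j i then 1 else 0 : ℕ) : ℕ∞) ≤
      ∑ j, shDist n sSH (s j) + ((∑ j, if sH i ≠ s j i then 1 else 0 : ℕ) : ℕ∞) := by
    rw [Nat.cast_sum, Nat.cast_sum, ← Finset.sum_add_distrib, ← Finset.sum_add_distrib]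
    exact Finset.sum_le_sum fun j _ => shDist_update_le hi sSH (s j) (sH i)
      (hnot i hcon j) fun h => hnot (i - 1) (hcon' h.1) j h.2
  have hH : ∑ j, hamDist n (Function.update sH i (sSH i)) (s j) +
      ∑ j, (if sH i ≠ s j i then 1 else 0) =
      ∑ j, hamDist n sH (s j) + ∑ j, if sSH i ≠ s j i then 1 else 0 := by
    rw [← Finset.sum_add_distrib, ← Finset.sum_add_distrib]
    exact Finset.sum_congr rfl fun j _ => hamDist_update hi sH (s j) (sSH i)
  have hHm := hHmin (Function.update sH i (sSH i))
  have hHl := hHlex (Function.update sH i (sSH i))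
  have hSHm := hSHmin (Function.update sSH i (sH i))
  have hSHl := hSHlex (Function.update sSH i (sH i))
  simp only [shDist_eq_greedySet, ← Nat.cast_sum, ← Nat.cast_add, Nat.cast_le] at hSH hSHm hSHl
  rcases lt_or_gt_of_ne hne with h | h
  · exact hHl (by omega) (lexLt_update hi h)
  · exact hSHl (by omega) (lexLt_update hi h)
end
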